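/- arXiv:1002.0110 — 4 statements merged into one kernel-verified Lean document; each statement's English description precedes it below -/
import Mathlib

section
/- Suppose 1 ≤ S < N and let x₀ ∈ X_S with ‖x₀‖₀ = S. Set ξ₀ = min_{k ∈ supp(x₀)} |x₀_k|. Then every measurable unbiased estimator x̂ whose components are square-integrable with respect to P_{x₀} satisfies the Hammersley–Chapman–Robbins-type lower bound ε(x₀; x̂) ≥ S σ² + (N − S − 1) σ² exp(−ξ₀² / σ²). -/
open MeasureTheory ProbabilityTheory Filter
open scoped ENNReal Classical

/-- The product Gaussian measure `P_x` on `ℝ^N` with mean `x` and variance `σ²` per coordinate. -/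
noncomputable def gaussP (N : ℕ) (σ : ℝ) (x : Fin N → ℝ) : Measure (Fin N → ℝ) :=
  MeasureTheory.Measure.pi fun i => gaussianReal (x i) (Real.toNNReal (σ ^ 2))

/-- The support of `x`: indices with nonzero entries. Its cardinality is `‖x‖₀`. -/
noncomputable def supp {N : ℕ} (x : Fin N → ℝ) : Finset (Fin N) :=
  Finset.univ.filter fun i => x i ≠ 0

/-- The sparse parameter set `X_S = {x : ‖x‖₀ ≤ S}`. -/
def sparseSet (N S : ℕ) : Set (Fin N → ℝ) := {x | (supp x).card ≤ S}

/-- An estimator is unbiased if each component is `P_x`-integrable with mean `x i`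
for every `x ∈ X_S`. -/
def Unbiased (N S : ℕ) (σ : ℝ) (est : (Fin N → ℝ) → Fin N → ℝ) : Prop :=
  ∀ x ∈ sparseSet N S, ∀ i,
    Integrable (fun y => est y i) (gaussP N σ x) ∧
    (∫ y, est y i ∂gaussP N σ x) = x i

/-- The MSE `ε(x; x̂) = ∫ ‖x̂(y) − x‖₂² dP_x(y)`, as an extended real. -/
noncomputable def MSE (N : ℕ) (σ : ℝ) (est : (Fin N → ℝ) → Fin N → ℝ)
    (x : Fin N → ℝ) : ℝ≥0∞ :=
  ∫⁻ y, ENNReal.ofReal (∑ i, (est y i - x i) ^ 2) ∂gaussP N σ x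
noncomputable def ell (v m a y : ℝ) : ℝ := Real.exp (((y - m) * (a - m) - (a - m) ^ 2 / 2) / v)

lemma ell_meas (v m a : ℝ) : Measurable (ell v m a) := by
  unfold ell; fun_prop

lemma ell_pos (v m a y : ℝ) : 0 < ell v m a y := Real.exp_pos _

lemma ell_mul (v : ℝ) (m a b y : ℝ) :
    ell v m a y * ell v m b y =
      Real.exp (-(m * (a + b - 2 * m) + (a - m) ^ 2 / 2 + (b - m) ^ 2 / 2) / v) *
        Real.exp (((a + b - 2 * m) / v) * y) := by
  unfold ell
  rw [← Real.exp_add, ← Real.exp_add]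
  congr 1
  ring

lemma ell_mul_integrable (v : NNReal) (m a b : ℝ) :
    Integrable (fun y => ell v m a y * ell v m b y) (gaussianReal m v) := by
  simp_rw [ell_mul]
  exact (integrable_exp_mul_gaussianReal _).const_mul _

lemma ell_mul_integral (v : NNReal) (hv : v ≠ 0) (m a b : ℝ) :
    ∫ y, ell v m a y * ell v m b y ∂(gaussianReal m v) = Real.exp ((a - m) * (b - m) / v) := by
  simp_rw [ell_mul]
  rw [integral_const_mul]
  have h := congrFun (mgf_fun_id_gaussianReal (μ := m) (v := v)) ((a + b - 2 * m) / v)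
  unfold mgf at h
  rw [h, ← Real.exp_add]
  congr 1
  have : (v : ℝ) ≠ 0 := by exact_mod_cast hv
  field_simp
  ring

lemma ell_self (v m y : ℝ) : ell v m m y = 1 := by simp [ell]

lemma ell_integrable (v : NNReal) (m a : ℝ) :
    Integrable (ell v m a) (gaussianReal m v) := by
  have := ell_mul_integrable v m a m
  simpa [ell_self] using this

lemma gauss_density (v : NNReal) (hv : v ≠ 0) (m a : ℝ) :
    gaussianReal a v = (gaussianReal m v).withDensity (fun y => ENNReal.ofReal (ell v m a y)) := by
  rw [gaussianReal_of_var_ne_zero _ hv, gaussianReal_of_var_ne_zero _ hv,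
    ← withDensity_mul _ (measurable_gaussianPDF _ _) (ell_meas _ _ _).ennreal_ofReal]
  congr 1
  ext y
  simp only [gaussianPDF, Pi.mul_apply]
  rw [← ENNReal.ofReal_mul (gaussianPDFReal_nonneg _ _ _)]
  congr 1
  unfold gaussianPDFReal ell
  rw [mul_assoc _ (Real.exp _) (Real.exp _), ← Real.exp_add]
  congr 2
  have : (v : ℝ) ≠ 0 := by exact_mod_cast hv
  field_simp
  ring

noncomputable def LL {N : ℕ} (v : ℝ) (x a : Fin N → ℝ) (y : Fin N → ℝ) : ℝ :=
  ∏ i, ell v (x i) (a i) (y i)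

lemma LL_meas {N : ℕ} (v : ℝ) (x a : Fin N → ℝ) : Measurable (LL v x a) := by
  unfold LL
  exact Finset.measurable_prod _ fun i _ => (ell_meas _ _ _).comp (measurable_pi_apply i)

lemma LL_pos {N : ℕ} (v : ℝ) (x a : Fin N → ℝ) (y : Fin N → ℝ) : 0 < LL v x a y :=
  Finset.prod_pos fun _ _ => ell_pos _ _ _ _

lemma pi_density {N : ℕ} (v : NNReal) (hv : v ≠ 0) (x a : Fin N → ℝ) :
    Measure.pi (fun i => gaussianReal (a i) v) =
      (Measure.pi (fun i => gaussianReal (x i) v)).withDensity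
        (fun y => ENNReal.ofReal (LL v x a y)) := by
  apply Measure.pi_eq
  intro s hs
  rw [withDensity_apply _ (MeasurableSet.univ_pi hs), Measure.restrict_pi_pi]
  unfold LL
  rw [← ofReal_integral_eq_lintegral_ofReal]
  · rw [integral_fintype_prod_eq_prod (fun i => ell v (x i) (a i)),
      ENNReal.ofReal_prod_of_nonneg]
    · refine Finset.prod_congr rfl fun i _ => ?_
      rw [gauss_density v hv (x i) (a i), withDensity_apply _ (hs i),
        ofReal_integral_eq_lintegral_ofReal]
      · exact (ell_integrable _ _ _).restrict
      · exact ae_of_all _ fun y => (ell_pos _ _ _ _).le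
    · intro i _
      exact integral_nonneg fun y => (ell_pos _ _ _ _).le
  · exact Integrable.fintype_prod fun i => (ell_integrable _ _ _).restrict
  · exact ae_of_all _ fun y => (LL_pos _ _ _ _).le

lemma LL_mul_integrable {N : ℕ} (v : NNReal) (x a b : Fin N → ℝ) :
    Integrable (fun y => LL v x a y * LL v x b y)
      (Measure.pi (fun i => gaussianReal (x i) v)) := by
  unfold LL
  simp_rw [← Finset.prod_mul_distrib]
  exact Integrable.fintype_prod (f := fun i y => ell v (x i) (a i) y * ell v (x i) (b i) y)
    fun i => ell_mul_integrable _ _ _ _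

lemma LL_mul_integral {N : ℕ} (v : NNReal) (hv : v ≠ 0) (x a b : Fin N → ℝ) :
    ∫ y, LL v x a y * LL v x b y ∂(Measure.pi (fun i => gaussianReal (x i) v)) =
      Real.exp ((∑ i, (a i - x i) * (b i - x i)) / v) := by
  unfold LL
  simp_rw [← Finset.prod_mul_distrib]
  rw [integral_fintype_prod_eq_prod (fun i y => ell v (x i) (a i) y * ell v (x i) (b i) y)]
  simp_rw [ell_mul_integral v hv]
  rw [← Real.exp_sum, Finset.sum_div]

lemma integral_density {N : ℕ} (v : NNReal) (hv : v ≠ 0) (x a : Fin N → ℝ)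
    (f : (Fin N → ℝ) → ℝ) :
    ∫ y, f y ∂(Measure.pi (fun i => gaussianReal (a i) v)) =
      ∫ y, LL v x a y * f y ∂(Measure.pi (fun i => gaussianReal (x i) v)) := by
  rw [pi_density v hv x a, integral_withDensity_eq_integral_toReal_smul
    (LL_meas _ _ _).ennreal_ofReal (ae_of_all _ fun y => ENNReal.ofReal_lt_top)]
  refine integral_congr_ae (ae_of_all _ fun y => ?_)
  simp [ENNReal.toReal_ofReal (LL_pos _ _ _ _).le]

lemma cs_sq {Ω : Type*} [MeasurableSpace Ω] (μ : Measure Ω) (f g : Ω → ℝ)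
    (hf : Integrable (fun y => f y ^ 2) μ) (hg : Integrable (fun y => g y ^ 2) μ)
    (hfg : Integrable (fun y => f y * g y) μ) :
    (∫ y, f y * g y ∂μ) ^ 2 ≤ (∫ y, f y ^ 2 ∂μ) * (∫ y, g y ^ 2 ∂μ) := by
  have h : ∀ t : ℝ, 0 ≤ (∫ y, f y ^ 2 ∂μ) * (t * t) + (2 * ∫ y, f y * g y ∂μ) * t
      + ∫ y, g y ^ 2 ∂μ := by
    intro t
    have h1 : 0 ≤ ∫ y, (t * f y + g y) ^ 2 ∂μ := integral_nonneg fun y => sq_nonneg _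
    have h2 : ∫ y, (t * f y + g y) ^ 2 ∂μ =
        ∫ y, ((t * t) * f y ^ 2 + (2 * t) * (f y * g y)) + g y ^ 2 ∂μ := by
      congr 1; ext y; ring
    have h3 : Integrable (fun y => (t * t) * f y ^ 2 + (2 * t) * (f y * g y)) μ :=
      (hf.const_mul _).add (hfg.const_mul _)
    rw [h2, integral_add h3 hg,
      integral_add (hf.const_mul _) (hfg.const_mul _), integral_const_mul, integral_const_mul] at h1
    linarith
  have := discrim_le_zero h
  unfold discrim at this
  nlinarith


lemma LL_self {N : ℕ} (v : ℝ) (x y : Fin N → ℝ) : LL v x x y = 1 := by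
  simp [LL, ell_self]

lemma LL_integrable {N : ℕ} (v : NNReal) (x a : Fin N → ℝ) :
    Integrable (LL v x a) (Measure.pi (fun i => gaussianReal (x i) v)) := by
  simpa [LL_self] using LL_mul_integrable v x a x

lemma LL_integral {N : ℕ} (v : NNReal) (hv : v ≠ 0) (x a : Fin N → ℝ) :
    ∫ y, LL v x a y ∂(Measure.pi (fun i => gaussianReal (x i) v)) = 1 := by
  simpa [LL_self] using LL_mul_integral v hv x a x

lemma lim_bound (v M : ℝ) (hv : 0 < v) (hM : 0 ≤ M)
    (h : ∀ t : ℝ, t ^ 2 ≤ M * (Real.exp (t ^ 2 / v) - 1)) : v ≤ M := by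
  have h1 : ∀ u : ℝ, 0 < u → u < 1 → v ≤ M * (1 + u) := by
    intro u hu hu1
    have h2 := h (Real.sqrt (u * v))
    rw [Real.sq_sqrt (by positivity), mul_div_assoc, div_self hv.ne', mul_one] at h2
    have h3 : Real.exp u - 1 ≤ u * (1 + u) := by
      have := Real.abs_exp_sub_one_sub_id_le (x := u) (by rw [abs_of_pos hu]; exact hu1.le)
      have := (abs_le.mp this).2
      nlinarith
    have h4 : u * v ≤ u * (M * (1 + u)) := by
      calc u * v ≤ _ := h2
        _ ≤ M * (u * (1 + u)) := mul_le_mul_of_nonneg_left h3 hM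
        _ = _ := by ring
    exact le_of_mul_le_mul_left h4 hu
  have h2 : Tendsto (fun u : ℝ => M * (1 + u)) (nhdsWithin 0 (Set.Ioi 0)) (nhds (M * (1 + 0))) :=
    ((by fun_prop : Continuous fun u : ℝ => M * (1 + u)).tendsto 0).mono_left nhdsWithin_le_nhds
  have h3 := ge_of_tendsto h2 (b := v) (by
    filter_upwards [Ioo_mem_nhdsGT (zero_lt_one' ℝ)] with u hu
    exact h1 u hu.1 hu.2)
  simpa using h3

/-- the key per-coordinate bound -/
lemma key {N : ℕ} (v : NNReal) (hv : v ≠ 0) (x a : Fin N → ℝ) (i : Fin N) (hai : a i = x i)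
    (f : (Fin N → ℝ) → ℝ) (hf : Measurable f)
    (hsq : Integrable (fun y => f y ^ 2) (Measure.pi (fun i => gaussianReal (x i) v)))
    (hu : ∀ t : ℝ,
      ∫ y, f y ∂(Measure.pi (fun j => gaussianReal (Function.update a i (x i + t) j) v))
       = x i + t) :
    v * Real.exp (-(∑ j, (a j - x j) ^ 2) / v) ≤
      ∫ y, (f y - x i) ^ 2 ∂(Measure.pi (fun i => gaussianReal (x i) v)) := by
  set P := Measure.pi (fun i => gaussianReal (x i) v) with hP
  have hv0 : (0 : ℝ) < v := lt_of_le_of_ne v.2 (by exact_mod_cast hv.symm)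
  have hf2 : MemLp f 2 P := (memLp_two_iff_integrable_sq hf.aestronglyMeasurable).2 hsq
  have hg2 : MemLp (fun y => f y - x i) 2 P := hf2.sub (memLp_const _)
  have hL2 : ∀ b, MemLp (LL v x b) 2 P := fun b => by
    refine (memLp_two_iff_integrable_sq (LL_meas _ _ _).aestronglyMeasurable).2 ?_
    simpa [sq] using LL_mul_integrable v x b b
  set c := Real.exp ((∑ j, (a j - x j) ^ 2) / v) with hc
  have hcpos : 0 < c := Real.exp_pos _
  have hmain : (v : ℝ) ≤ (∫ y, (f y - x i) ^ 2 ∂P) * c := by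
    refine lim_bound _ _ hv0 (mul_nonneg (integral_nonneg fun y => sq_nonneg _) hcpos.le) ?_
    intro t
    set b := Function.update a i (x i + t) with hb
    have ha : Function.update a i (x i + 0) = a := by
      rw [add_zero, ← hai, Function.update_eq_self]
    have hmean : ∀ s : ℝ, ∫ y, (f y - x i) * LL v x (Function.update a i (x i + s)) y ∂P = s := by
      intro s
      have h1 := hu s
      rw [integral_density v hv x] at h1
      have : ∀ y, (f y - x i) * LL v x (Function.update a i (x i + s)) y =
        LL v x (Function.update a i (x i + s)) y * f y -
          x i * LL v x (Function.update a i (x i + s)) y := fun y => by ring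
      simp_rw [this]
      rw [integral_sub, integral_const_mul, LL_integral v hv, h1]
      · ring
      · exact (hL2 _).integrable_mul hf2
      · exact (LL_integrable _ _ _).const_mul _
    have hmb := hmean t
    have hma := hmean 0
    rw [ha] at hma
    have hd2 : MemLp (fun y => LL v x b y - LL v x a y) 2 P := (hL2 b).sub (hL2 a)
    have hcs := cs_sq P (fun y => f y - x i) (fun y => LL v x b y - LL v x a y)
      hg2.integrable_sq hd2.integrable_sq (hg2.integrable_mul hd2)
    have e1 : ∫ y, (f y - x i) * (LL v x b y - LL v x a y) ∂P = t := by
      simp_rw [mul_sub]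
      have ib : ∀ b, Integrable (fun y => (f y - x i) * LL v x b y) P :=
        fun b => hg2.integrable_mul (hL2 b)
      rw [integral_sub (ib b) (ib a), hma, hmb, sub_zero]
    have s1 : ∑ j, (b j - x j) * (a j - x j) = ∑ j, (a j - x j) ^ 2 := by
      refine Finset.sum_congr rfl fun j _ => ?_
      by_cases hj : j = i
      · subst hj; simp [hai]
      · simp [hb, hj, sq]
    have s2 : ∑ j, (b j - x j) * (b j - x j) = ∑ j, (a j - x j) ^ 2 + t ^ 2 := by
      have : t ^ 2 = ∑ j, if j = i then t ^ 2 else 0 := by simp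
      rw [this, ← Finset.sum_add_distrib]
      refine Finset.sum_congr rfl fun j _ => ?_
      by_cases hj : j = i
      · subst hj; simp [hai, hb, sq]
      · simp [hb, hj, sq]
    have s3 : ∑ j, (a j - x j) * (a j - x j) = ∑ j, (a j - x j) ^ 2 := by simp [sq]
    have e2 : ∫ y, (LL v x b y - LL v x a y) ^ 2 ∂P = c * (Real.exp (t ^ 2 / v) - 1) := by
      have : ∀ y, (LL v x b y - LL v x a y) ^ 2 = LL v x b y * LL v x b y
        - 2 * (LL v x b y * LL v x a y) + LL v x a y * LL v x a y := fun y => by ring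
      simp_rw [this]
      have I : ∀ b c, Integrable (fun y => LL v x b y * LL v x c y) P := LL_mul_integrable v x
      have I2 : Integrable (fun y => LL v x b y * LL v x b y
        - 2 * (LL v x b y * LL v x a y)) P := (I b b).sub ((I b a).const_mul 2)
      rw [integral_add I2 (I a a), integral_sub (I b b) ((I b a).const_mul 2),
        integral_const_mul, LL_mul_integral v hv,
        LL_mul_integral v hv, LL_mul_integral v hv, s1, s2, s3, add_div, Real.exp_add]
      ring
    rw [e1, e2] at hcs
    linarith
  rw [neg_div, Real.exp_neg, ← div_eq_mul_inv, div_le_iff₀ hcpos]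
  exact hmain

lemma supp_update_le {N : ℕ} (a : Fin N → ℝ) (i : Fin N) (r : ℝ) :
    supp (Function.update a i r) ⊆ insert i (supp a) := by
  intro j hj
  by_cases h : j = i
  · simp [h]
  · simp [supp, h] at hj ⊢
    exact hj

/-- Hammersley–Chapman–Robbins-type lower bound for `‖x₀‖₀ = S`:
`ε(x₀; x̂) ≥ S σ² + (N − S − 1) σ² exp(−ξ₀²/σ²)` where
`ξ₀ = min_{k ∈ supp(x₀)} |x₀_k|`. -/
theorem stmt_3 (N S : ℕ) (σ : ℝ) (hσ : 0 < σ) (hS : 1 ≤ S) (hSN : S < N)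
    (x₀ : Fin N → ℝ) (hcard : (supp x₀).card = S) (hne : (supp x₀).Nonempty)
    (est : (Fin N → ℝ) → Fin N → ℝ) (hmeas : Measurable est)
    (hunb : Unbiased N S σ est)
    (hsq : ∀ i, Integrable (fun y => (est y i) ^ 2) (gaussP N σ x₀)) :
    ENNReal.ofReal ((S : ℝ) * σ ^ 2 + ((N : ℝ) - S - 1) * σ ^ 2 *
        Real.exp (-((supp x₀).inf' hne fun k => |x₀ k|) ^ 2 / σ ^ 2))
      ≤ MSE N σ est x₀ := by
  set v := Real.toNNReal (σ ^ 2) with hvdef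
  have hvr : (v : ℝ) = σ ^ 2 := Real.coe_toNNReal _ (by positivity)
  have hv : v ≠ 0 := by
    intro h
    rw [h] at hvr
    have : 0 < σ ^ 2 := by positivity
    simp only [NNReal.coe_zero] at hvr
    exact this.ne hvr
  set ξ := (supp x₀).inf' hne fun k => |x₀ k| with hξ
  have hmi : ∀ i, Measurable (fun y => est y i) := fun i => (measurable_pi_apply i).comp hmeas
  have hin : ∀ i ∈ supp x₀, σ ^ 2 ≤ ∫ y, (est y i - x₀ i) ^ 2 ∂gaussP N σ x₀ := by
    intro i hi
    have := key v hv x₀ x₀ i rfl (fun y => est y i) (hmi i) (hsq i) (by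
      intro t
      have h := (hunb (Function.update x₀ i (x₀ i + t)) ?_ i).2
      · simpa [gaussP] using h
      · refine (Finset.card_le_card (supp_update_le _ _ _)).trans ?_
        rw [Finset.insert_eq_of_mem hi, hcard])
    simp only [sub_self, ne_eq, OfNat.ofNat_ne_zero, not_false_eq_true, zero_pow,
      Finset.sum_const_zero, neg_zero, zero_div, Real.exp_zero, mul_one, hvr] at this
    exact this
  obtain ⟨k, hk, hkξ⟩ := Finset.exists_mem_eq_inf' hne fun k => |x₀ k|
  have hout : ∀ i ∉ supp x₀, σ ^ 2 * Real.exp (-ξ ^ 2 / σ ^ 2) ≤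
      ∫ y, (est y i - x₀ i) ^ 2 ∂gaussP N σ x₀ := by
    intro i hi
    have hik : i ≠ k := fun h => hi (h ▸ hk)
    have := key v hv x₀ (Function.update x₀ k 0) i (by simp [hik]) (fun y => est y i) (hmi i)
      (hsq i) (by
      intro t
      have h := (hunb (Function.update (Function.update x₀ k 0) i (x₀ i + t)) ?_ i).2
      · simpa [gaussP] using h
      · have hs : supp (Function.update x₀ k 0) ⊆ (supp x₀).erase k := by
          intro j hj
          by_cases h : j = k
          · subst h; simp [supp] at hj
          · simp [supp, h] at hj ⊢
            exact hj
        calc _ ≤ _ := Finset.card_le_card (supp_update_le _ _ _)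
          _ ≤ (supp (Function.update x₀ k 0)).card + 1 := Finset.card_insert_le _ _
          _ ≤ ((supp x₀).erase k).card + 1 := by gcongr
          _ = S := by rw [Finset.card_erase_add_one hk, hcard])
    have hsum : ∑ j, (Function.update x₀ k 0 j - x₀ j) ^ 2 = ξ ^ 2 := by
      rw [Finset.sum_eq_single k]
      · rw [hξ, hkξ]; simp
      · intro j _ hj; simp [hj]
      · simp
    rw [hsum, hvr] at this
    exact this
  haveI : IsProbabilityMeasure (gaussP N σ x₀) := by unfold gaussP; infer_instance
  have hint : ∀ i, Integrable (fun y => (est y i - x₀ i) ^ 2) (gaussP N σ x₀) := fun i => by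
    have hf2 : MemLp (fun y => est y i) 2 (gaussP N σ x₀) :=
      (memLp_two_iff_integrable_sq (hmi i).aestronglyMeasurable).2 (hsq i)
    exact (hf2.sub (memLp_const (x₀ i))).integrable_sq
  unfold MSE
  rw [← ofReal_integral_eq_lintegral_ofReal (integrable_finsetSum _ fun i _ => hint i)
    (ae_of_all _ fun y => Finset.sum_nonneg fun i _ => sq_nonneg _),
    integral_finsetSum _ fun i _ => hint i]
  apply ENNReal.ofReal_le_ofReal
  rw [← Finset.sum_add_sum_compl (supp x₀)]
  have h1 : (S : ℝ) * σ ^ 2 ≤ ∑ i ∈ supp x₀, ∫ y, (est y i - x₀ i) ^ 2 ∂gaussP N σ x₀ := by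
    have := Finset.card_nsmul_le_sum (supp x₀) _ _ hin
    rwa [hcard, nsmul_eq_mul] at this
  have h2 : ((N : ℝ) - S) * (σ ^ 2 * Real.exp (-ξ ^ 2 / σ ^ 2)) ≤
      ∑ i ∈ (supp x₀)ᶜ, ∫ y, (est y i - x₀ i) ^ 2 ∂gaussP N σ x₀ := by
    have := Finset.card_nsmul_le_sum (supp x₀)ᶜ _ _ (fun i hi => hout i (by simpa using hi))
    rwa [Finset.card_compl, hcard, Fintype.card_fin, nsmul_eq_mul, Nat.cast_sub hSN.le] at this
  have h3 : 0 ≤ σ ^ 2 * Real.exp (-ξ ^ 2 / σ ^ 2) := by positivity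
  nlinarith
end

section
/- Suppose 1 ≤ S < N and let x₀ ∈ X_S with ‖x₀‖₀ < S. Then the Barankin bound at x₀ equals N σ²: every measurable unbiased estimator x̂ with components square-integrable with respect to P_{x₀} satisfies ε(x₀; x̂) ≥ N σ², and this value is attained by the least-squares estimator x̂_LS(y) = y, which is unbiased with ε(x₀; x̂_LS) = N σ². -/
open MeasureTheory ProbabilityTheory Filter
open scoped ENNReal Classical

noncomputable def likR (σ m t y : ℝ) : ℝ :=
  Real.exp (t * (y - m) / σ ^ 2 - t ^ 2 / (2 * σ ^ 2))

lemma likR_meas (σ m t : ℝ) : Measurable (likR σ m t) := by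
  unfold likR; fun_prop

lemma toNN_ne {σ : ℝ} (hσ : 0 < σ) : Real.toNNReal (σ ^ 2) ≠ 0 := by
  have : 0 < Real.toNNReal (σ ^ 2) := Real.toNNReal_pos.2 (by positivity)
  exact this.ne'

lemma gauss_shift {σ : ℝ} (hσ : 0 < σ) (m t : ℝ) :
    gaussianReal (m + t) (Real.toNNReal (σ ^ 2)) =
      (gaussianReal m (Real.toNNReal (σ ^ 2))).withDensity
        (fun y => ENNReal.ofReal (likR σ m t y)) := by
  have hv := toNN_ne hσ
  rw [gaussianReal_of_var_ne_zero _ hv, gaussianReal_of_var_ne_zero _ hv,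
    ← withDensity_mul _ (measurable_gaussianPDF _ _) (likR_meas σ m t).ennreal_ofReal]
  congr 1
  funext y
  simp only [Pi.mul_apply, gaussianPDF]
  rw [← ENNReal.ofReal_mul (gaussianPDFReal_nonneg _ _ _)]
  congr 1
  simp only [gaussianPDFReal, likR, Real.coe_toNNReal _ (sq_nonneg σ)]
  rw [mul_assoc _ (Real.exp _) (Real.exp _), ← Real.exp_add]
  congr 2
  field_simp
  ring

lemma gaussP_shift {N : ℕ} {σ : ℝ} (hσ : 0 < σ) (x : Fin N → ℝ) (i : Fin N) (t : ℝ) :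
    gaussP N σ (Function.update x i (x i + t)) =
      (gaussP N σ x).withDensity (fun y => ENNReal.ofReal (likR σ (x i) t (y i))) := by
  have hm := likR_meas σ (x i) t
  unfold gaussP
  apply Measure.pi_eq
  intro s hs
  rw [withDensity_apply _ (MeasurableSet.univ_pi hs),
    ← lintegral_indicator (MeasurableSet.univ_pi hs)]
  let X : (j : Fin N) → ℝ → ℝ≥0∞ := fun j y =>
    (s j).indicator (fun y => if j = i then ENNReal.ofReal (likR σ (x i) t y) else 1) y
  have hX : ∀ j, Measurable (X j) := by
    intro j
    refine Measurable.indicator ?_ (hs j)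
    by_cases h : j = i
    · simp only [h, if_true]; exact hm.ennreal_ofReal
    · simp only [h, if_false]; exact measurable_const
  have h1 : ∀ y : Fin N → ℝ, (Set.univ.pi s).indicator
      (fun y => ENNReal.ofReal (likR σ (x i) t (y i))) y = ∏ j, X j (y j) := by
    intro y
    by_cases hy : y ∈ Set.univ.pi s
    · rw [Set.indicator_of_mem hy]
      have : ∀ j, X j (y j) = if j = i then ENNReal.ofReal (likR σ (x i) t (y j)) else 1 :=
        fun j => Set.indicator_of_mem (hy j (Set.mem_univ _)) _
      simp [this]
    · rw [Set.indicator_of_notMem hy]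
      simp only [Set.mem_pi, Set.mem_univ, true_implies, not_forall] at hy
      obtain ⟨j, hj⟩ := hy
      exact (Finset.prod_eq_zero (Finset.mem_univ j) (Set.indicator_of_notMem hj _)).symm
  simp_rw [h1]
  rw [lintegral_prod_eq_prod_lintegral_of_indepFun Finset.univ
    (fun j (y : Fin N → ℝ) => X j (y j))
    (iIndepFun_pi fun j => (hX j).aemeasurable)
    (fun j => (hX j).comp (measurable_pi_apply j))]
  refine Finset.prod_congr rfl fun j _ => ?_
  rw [(measurePreserving_eval (fun i => gaussianReal (x i) (Real.toNNReal (σ ^ 2))) j).lintegral_comp (hX j)]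
  rw [lintegral_indicator (hs j)]
  by_cases h : j = i
  · subst h
    simp only [if_true, Function.update_self]
    rw [gauss_shift hσ, withDensity_apply _ (hs j)]
  · simp [h]

instance {N : ℕ} {σ : ℝ} {x : Fin N → ℝ} : IsProbabilityMeasure (gaussP N σ x) := by
  unfold gaussP; infer_instance

section
variable {N : ℕ} {σ : ℝ} (hσ : 0 < σ) (x : Fin N → ℝ) (i : Fin N) (t : ℝ)

lemma lik_meas : Measurable (fun y : Fin N → ℝ => ENNReal.ofReal (likR σ (x i) t (y i))) :=
  ((likR_meas σ (x i) t).comp (measurable_pi_apply i)).ennreal_ofReal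

include hσ in
lemma int_shift (g : (Fin N → ℝ) → ℝ) :
    ∫ y, g y ∂gaussP N σ (Function.update x i (x i + t)) =
      ∫ y, likR σ (x i) t (y i) * g y ∂gaussP N σ x := by
  rw [gaussP_shift hσ, integral_withDensity_eq_integral_toReal_smul (lik_meas x i t)
    (by simp)]
  simp [likR, (Real.exp_pos _).le]

include hσ in
lemma intble_shift (g : (Fin N → ℝ) → ℝ) :
    Integrable g (gaussP N σ (Function.update x i (x i + t))) ↔
      Integrable (fun y => likR σ (x i) t (y i) * g y) (gaussP N σ x) := by
  rw [gaussP_shift hσ, integrable_withDensity_iff_integrable_smul' (lik_meas x i t)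
    (by simp)]
  simp [likR, (Real.exp_pos _).le]
end

theorem key_s8 {N : ℕ} {σ : ℝ} (hσ : 0 < σ) (x : Fin N → ℝ) (i : Fin N)
    (e : (Fin N → ℝ) → ℝ) 
    (hint : ∀ t, Integrable e (gaussP N σ (Function.update x i (x i + t))))
    (hval : ∀ t, ∫ y, e y ∂gaussP N σ (Function.update x i (x i + t)) = t)
    (hsq : Integrable (fun y => e y ^ 2) (gaussP N σ x)) :
    σ ^ 2 ≤ ∫ y, e y ^ 2 ∂gaussP N σ x := by
  set V := ∫ y, e y ^ 2 ∂gaussP N σ x with hV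
  have hV0 : 0 ≤ V := integral_nonneg fun y => sq_nonneg _
  have he : Integrable e (gaussP N σ x) := by simpa using hint 0
  have he0 : ∫ y, e y ∂gaussP N σ x = 0 := by simpa using hval 0
  have hLi : ∀ t, Integrable (fun y => likR σ (x i) t (y i)) (gaussP N σ x) := fun t => by
    simpa using (intble_shift hσ x i t (fun _ => 1)).1 (integrable_const _)
  have hL : ∀ t, ∫ y, likR σ (x i) t (y i) ∂gaussP N σ x = 1 := fun t => by
    simpa using (int_shift hσ x i t (fun _ => 1)).symm
  have hsqL : ∀ t z, likR σ (x i) t z ^ 2 = Real.exp (t ^ 2 / σ ^ 2) * likR σ (x i) (2 * t) z := by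
    intro t z
    simp only [likR]
    rw [← Real.exp_nat_mul, ← Real.exp_add]
    congr 1
    push_cast
    field_simp
    ring
  have hmain : ∀ t l : ℝ, 0 ≤ V - 2 * l * t + l ^ 2 * (Real.exp (t ^ 2 / σ ^ 2) - 1) := by
    intro t l
    have h0 : 0 ≤ ∫ y, (e y - l * (likR σ (x i) t (y i) - 1)) ^ 2 ∂gaussP N σ x :=
      integral_nonneg fun y => sq_nonneg _
    have heL := (intble_shift hσ x i t e).1 (hint t)
    have heL' := (int_shift hσ x i t e).symm.trans (hval t)
    have : ∀ y : Fin N → ℝ, (e y - l * (likR σ (x i) t (y i) - 1)) ^ 2 =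
        e y ^ 2 + ((-2 * l) * (likR σ (x i) t (y i) * e y) + (2 * l * e y +
         (l ^ 2 * Real.exp (t ^ 2 / σ ^ 2) * likR σ (x i) (2 * t) (y i) +
          (- 2 * l ^ 2 * likR σ (x i) t (y i) + l ^ 2)))) := by
      intro y
      have := hsqL t (y i)
      linear_combination l ^ 2 * this
    simp_rw [this] at h0
    have i5 := (hLi t).const_mul (-2 * l ^ 2)
    have i4 := (hLi (2 * t)).const_mul (l ^ 2 * Real.exp (t ^ 2 / σ ^ 2))
    have i3 := he.const_mul (2 * l)
    have i2 := heL.const_mul (-2 * l)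
    have i6 := integrable_const (μ := gaussP N σ x) (l ^ 2)
    have j5 := integral_add i5 i6
    have j4 := integral_add i4 (i5.add i6)
    have j3 := integral_add i3 (i4.add (i5.add i6))
    have j2 := integral_add i2 (i3.add (i4.add (i5.add i6)))
    have j1 := integral_add hsq (i2.add (i3.add (i4.add (i5.add i6))))
    simp only [Pi.add_apply] at j1 j2 j3 j4 j5
    rw [j1, j2, j3, j4, j5] at h0
    simp only [integral_const_mul, hL, heL', he0, integral_const, probReal_univ, smul_eq_mul] at h0
    linarith
  have h2 : ∀ u : ℝ, 0 < u → u ≤ 1 → σ ^ 2 ≤ V * (1 + u) := by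
    intro u hu hu1
    have hW : 0 < Real.exp u - 1 := by linarith [Real.add_one_lt_exp hu.ne']
    have hW2 : Real.exp u - 1 ≤ u * (1 + u) := by
      have := Real.abs_exp_sub_one_sub_id_le (x := u) (by rw [abs_of_pos hu]; exact hu1)
      have := (abs_le.1 this).2
      nlinarith
    have hm := hmain (σ * Real.sqrt u) (σ * Real.sqrt u / (Real.exp u - 1))
    have hs : Real.sqrt u ^ 2 = u := Real.sq_sqrt hu.le
    rw [mul_pow, hs, mul_div_cancel_left₀ _ (by positivity : σ ^ 2 ≠ 0)] at hm
    have h3 : V - 2 * (σ * Real.sqrt u / (Real.exp u - 1)) * (σ * Real.sqrt u) +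
        (σ * Real.sqrt u / (Real.exp u - 1)) ^ 2 * (Real.exp u - 1) =
        V - σ ^ 2 * u / (Real.exp u - 1) := by
      field_simp
      rw [hs]; ring
    rw [h3, sub_nonneg, div_le_iff₀ hW] at hm
    have : σ ^ 2 * u ≤ (V * (1 + u)) * u := by
      calc _ ≤ _ := hm
        _ ≤ V * (u * (1 + u)) := by gcongr
        _ = _ := by ring
    exact le_of_mul_le_mul_right this hu
  have hlim : Tendsto (fun u : ℝ => V * (1 + u)) (nhdsWithin 0 (Set.Ioi 0)) (nhds V) := by
    have : Continuous (fun u : ℝ => V * (1 + u)) := by fun_prop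
    simpa using (this.tendsto 0).mono_left nhdsWithin_le_nhds
  refine ge_of_tendsto hlim ?_
  filter_upwards [Ioo_mem_nhdsGT (zero_lt_one' ℝ)] with u hu
  exact h2 u hu.1 hu.2.le

lemma MSE_eq {N : ℕ} {σ : ℝ} (est : (Fin N → ℝ) → Fin N → ℝ) (x : Fin N → ℝ)
    (h : ∀ i, Integrable (fun y => (est y i - x i) ^ 2) (gaussP N σ x)) :
    MSE N σ est x = ENNReal.ofReal (∑ i, ∫ y, (est y i - x i) ^ 2 ∂gaussP N σ x) := by
  unfold MSE
  rw [← integral_finsetSum _ fun i _ => h i, ofReal_integral_eq_lintegral_ofReal]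
  · exact integrable_finsetSum _ fun i _ => h i
  · exact ae_of_all _ fun y => Finset.sum_nonneg fun i _ => sq_nonneg _

lemma unb_id (N S : ℕ) (σ : ℝ) : Unbiased N S σ (fun y => y) := by
  intro x _ i
  unfold gaussP
  have hi : Integrable id (gaussianReal (x i) (Real.toNNReal (σ ^ 2))) :=
    (memLp_id_gaussianReal 1).integrable (by simp)
  refine ⟨integrable_eval (μ := fun i => gaussianReal (x i) (Real.toNNReal (σ ^ 2))) hi, ?_⟩
  rw [integral_eval (μ := fun i => gaussianReal (x i) (Real.toNNReal (σ ^ 2)))]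
  exact integral_id_gaussianReal

/-- For `‖x₀‖₀ < S` the Barankin bound at `x₀` equals `N σ²`: every measurable unbiased
square-integrable estimator has MSE at least `N σ²`, and the least-squares estimator
`x̂_LS(y) = y` is unbiased and attains this value. -/
theorem stmt_8 (N S : ℕ) (σ : ℝ) (hσ : 0 < σ) (hS : 1 ≤ S) (hSN : S < N)
    (x₀ : Fin N → ℝ) (hcard : (supp x₀).card < S) :
    (∀ est : (Fin N → ℝ) → Fin N → ℝ, Measurable est → Unbiased N S σ est →
        (∀ i, Integrable (fun y => (est y i) ^ 2) (gaussP N σ x₀)) →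
        ENNReal.ofReal ((N : ℝ) * σ ^ 2) ≤ MSE N σ est x₀) ∧
    Unbiased N S σ (fun y => y) ∧
    MSE N σ (fun y => y) x₀ = ENNReal.ofReal ((N : ℝ) * σ ^ 2) := by
  refine ⟨?_, unb_id N S σ, ?_⟩
  · intro est hm hu hsq
    have hx0 : x₀ ∈ sparseSet N S := hcard.le
    have hmem : ∀ i t, Function.update x₀ i (x₀ i + t) ∈ sparseSet N S := by
      intro i t
      have : supp (Function.update x₀ i (x₀ i + t)) ⊆ insert i (supp x₀) := by
        intro j hj
        by_cases h : j = i
        · simp [h]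
        · simp only [supp, Finset.mem_filter, Finset.mem_univ, true_and, ne_eq,
            Finset.mem_insert, Function.update_of_ne h] at hj ⊢
          exact Or.inr hj
      have h1 := Finset.card_le_card this
      have h2 := Finset.card_insert_le i (supp x₀)
      simp only [sparseSet, Set.mem_setOf_eq]
      omega
    have hsq' : ∀ i, Integrable (fun y => (est y i - x₀ i) ^ 2) (gaussP N σ x₀) := by
      intro i
      have h := ((hsq i).sub ((hu x₀ hx0 i).1.const_mul (2 * x₀ i))).add
        (integrable_const (x₀ i ^ 2))
      refine h.congr (ae_of_all _ fun y => ?_)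
      simp only [Pi.add_apply, Pi.sub_apply]
      ring
    rw [MSE_eq est x₀ hsq']
    apply ENNReal.ofReal_le_ofReal
    have : ∀ i ∈ Finset.univ, σ ^ 2 ≤ ∫ y, (est y i - x₀ i) ^ 2 ∂gaussP N σ x₀ := by
      intro i _
      refine key_s8 hσ x₀ i (fun y => est y i - x₀ i) (fun t => ?_) (fun t => ?_) (hsq' i)
      · exact (hu _ (hmem i t) i).1.sub (integrable_const _)
      · rw [integral_sub (hu _ (hmem i t) i).1 (integrable_const _), (hu _ (hmem i t) i).2]
        simp
    simpa using Finset.card_nsmul_le_sum _ _ _ this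
  · have hi : ∀ i, Integrable (fun y : ℝ => (y - x₀ i) ^ 2)
        (gaussianReal (x₀ i) (Real.toNNReal (σ ^ 2))) := fun i =>
      ((memLp_id_gaussianReal 2).sub (memLp_const (x₀ i))).integrable_sq
    rw [MSE_eq]
    · have : ∀ i, ∫ y, (y i - x₀ i) ^ 2 ∂gaussP N σ x₀ = σ ^ 2 := by
        intro i
        unfold gaussP
        rw [integral_comp_eval (μ := fun i => gaussianReal (x₀ i) (Real.toNNReal (σ ^ 2)))
          (f := fun z => (z - x₀ i) ^ 2) (hi i).aestronglyMeasurable]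
        have h := variance_fun_id_gaussianReal (μ := x₀ i) (v := Real.toNNReal (σ ^ 2))
        rw [variance_eq_integral aemeasurable_id', integral_id_gaussianReal] at h
        rw [h, Real.coe_toNNReal _ (sq_nonneg σ)]
      simp [this]
    · intro i
      exact integrable_comp_eval (μ := fun i => gaussianReal (x₀ i) (Real.toNNReal (σ ^ 2))) (hi i)
end

section
/- Suppose 1 ≤ S < N, let x₀ ∈ X_S with ‖x₀‖₀ = S, let k ∉ supp(x₀), and set K = {k} ∪ supp(x₀). Consider measurable corrections f : ℝ^N → ℝ satisfying: (odd symmetry) for every l ∈ K, f(y) changes sign when the sign of the coordinate y_l is flipped (all other coordinates fixed); (independence) f(y) = f(y') whenever y_l = y'_l for all l ∈ K; (unbiasedness) the component estimator y ↦ y_k + f(y) is P_x-integrable with ∫ (y_k + f(y)) dP_x(y) = x_k for every x ∈ X_S; and y ↦ y_k + f(y) is square-integrable with respect to P_{x₀}. Then the choice f_c(y) = −y_k · ∏_{l ∈ supp(x₀)} tanh(y_l x₀_l / σ²) satisfies all these constraints and minimizes the MSE at x₀ among all such f: for every admissible f, ∫ (y_k + f_c(y))² dP_{x₀}(y) ≤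 ∫ (y_k + f(y))² dP_{x₀}(y). -/
open MeasureTheory ProbabilityTheory Filter
open scoped ENNReal Classical

/-- Admissible corrections `f` for the component `k ∉ supp(x₀)`: measurable, odd under a
sign flip of any coordinate in `K = {k} ∪ supp(x₀)`, independent of coordinates outside
`K`, with `y ↦ y_k + f(y)` unbiased for the `k`-th component and square-integrable
w.r.t. `P_{x₀}`. -/
def Admissible (N S : ℕ) (σ : ℝ) (x₀ : Fin N → ℝ) (k : Fin N)
    (f : (Fin N → ℝ) → ℝ) : Prop :=
  Measurable f ∧
  (∀ l ∈ insert k (supp x₀), ∀ y : Fin N → ℝ,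
    f (Function.update y l (-(y l))) = - f y) ∧
  (∀ y y' : Fin N → ℝ, (∀ l ∈ insert k (supp x₀), y l = y' l) → f y = f y') ∧
  (∀ x ∈ sparseSet N S,
    Integrable (fun y => y k + f y) (gaussP N σ x) ∧
    (∫ y, (y k + f y) ∂gaussP N σ x) = x k) ∧
  Integrable (fun y => (y k + f y) ^ 2) (gaussP N σ x₀)

/-- The optimal constrained correction `f_c(y) = −y_k ∏_{l ∈ supp(x₀)} tanh(y_l x₀_l/σ²)`. -/
noncomputable def fc (N : ℕ) (σ : ℝ) (x₀ : Fin N → ℝ) (k : Fin N)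
    (y : Fin N → ℝ) : ℝ :=
  - (y k * ∏ l ∈ supp x₀, Real.tanh (y l * x₀ l / σ ^ 2))


lemma gaussP_eq (N : ℕ) (σ : ℝ) (hσ : 0 < σ) (x : Fin N → ℝ) :
    gaussP N σ x = (volume : Measure (Fin N → ℝ)).withDensity
      (fun y => ENNReal.ofReal (∏ i, gaussianPDFReal (x i) (Real.toNNReal (σ ^ 2)) (y i))) := by
  have hv : Real.toNNReal (σ ^ 2) ≠ 0 := by
    have : 0 < σ ^ 2 := by positivity
    simpa using this.ne'
  unfold gaussP
  apply Measure.pi_eq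
  intro s hs
  have hpi : MeasurableSet (Set.pi Set.univ s) := MeasurableSet.univ_pi hs
  have hint : ∀ i, Integrable ((s i).indicator
      (gaussianPDFReal (x i) (Real.toNNReal (σ ^ 2)))) volume := fun i =>
    (integrable_gaussianPDFReal _ _).indicator (hs i)
  have hnn : ∀ i y, 0 ≤ (s i).indicator
      (gaussianPDFReal (x i) (Real.toNNReal (σ ^ 2))) y := fun i y =>
    Set.indicator_nonneg (fun _ _ => gaussianPDFReal_nonneg _ _ _) _
  rw [withDensity_apply _ hpi, ← lintegral_indicator hpi]
  have h1 : ∀ y : Fin N → ℝ, (Set.pi Set.univ s).indicator (fun y => ENNReal.ofReal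
      (∏ i, gaussianPDFReal (x i) (Real.toNNReal (σ ^ 2)) (y i))) y =
      ENNReal.ofReal (∏ i, (s i).indicator
        (gaussianPDFReal (x i) (Real.toNNReal (σ ^ 2))) (y i)) := by
    intro y
    by_cases hy : y ∈ Set.pi Set.univ s
    · rw [Set.indicator_of_mem hy]
      congr 1
      refine Finset.prod_congr rfl fun i _ => ?_
      rw [Set.indicator_of_mem (hy i trivial)]
    · rw [Set.indicator_of_notMem hy]
      simp only [Set.mem_pi, Set.mem_univ, true_imp_iff, not_forall] at hy
      obtain ⟨i, hi⟩ := hy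
      rw [Finset.prod_eq_zero (Finset.mem_univ i) (Set.indicator_of_notMem hi _)]
      simp
  simp_rw [h1]
  have hI : Integrable (fun y : Fin N → ℝ => ∏ i, (s i).indicator
        (gaussianPDFReal (x i) (Real.toNNReal (σ ^ 2))) (y i)) volume :=
    Integrable.fintype_prod (f := fun i => (s i).indicator
        (gaussianPDFReal (x i) (Real.toNNReal (σ ^ 2)))) hint
  rw [← ofReal_integral_eq_lintegral_ofReal hI
    (Eventually.of_forall fun y => Finset.prod_nonneg fun i _ => hnn i _),
    integral_fintype_prod_volume_eq_prod (fun i => (s i).indicator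
        (gaussianPDFReal (x i) (Real.toNNReal (σ ^ 2)))),
    ENNReal.ofReal_prod_of_nonneg (fun i _ => integral_nonneg (hnn i))]
  refine Finset.prod_congr rfl fun i _ => ?_
  rw [gaussianReal_apply_eq_integral _ hv, integral_indicator (hs i)]

lemma integral_gaussP (N : ℕ) (σ : ℝ) (hσ : 0 < σ) (x : Fin N → ℝ) (h : (Fin N → ℝ) → ℝ) :
    ∫ y, h y ∂gaussP N σ x =
      ∫ y, (∏ i, gaussianPDFReal (x i) (Real.toNNReal (σ ^ 2)) (y i)) * h y := by
  have hm : Measurable fun y : Fin N → ℝ =>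
      ENNReal.ofReal (∏ i, gaussianPDFReal (x i) (Real.toNNReal (σ ^ 2)) (y i)) := by
    refine Measurable.ennreal_ofReal (Finset.measurable_fun_prod _ fun i _ => ?_)
    exact (measurable_gaussianPDFReal _ _).comp (measurable_pi_apply i)
  rw [gaussP_eq N σ hσ, integral_withDensity_eq_integral_toReal_smul hm (by simp)]
  refine integral_congr_ae (Eventually.of_forall fun y => ?_)
  simp only [smul_eq_mul]
  rw [ENNReal.toReal_ofReal (Finset.prod_nonneg fun i _ => gaussianPDFReal_nonneg _ _ _)]

/-- flip of the l-th coordinate preserves a product measure with symmetric l-th marginal -/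
lemma flip_mp {N : ℕ} (μ : Fin N → Measure ℝ) [∀ i, SigmaFinite (μ i)] (l : Fin N)
    (hl : MeasurePreserving (fun t : ℝ => -t) (μ l) (μ l)) :
    MeasurePreserving (fun y : Fin N → ℝ => Function.update y l (-(y l)))
      (Measure.pi μ) (Measure.pi μ) := by
  have := measurePreserving_pi μ μ (f := fun i t => if i = l then -t else t) (by
    intro i
    by_cases h : i = l
    · subst h; simpa using hl
    · simp only [h, if_false]; exact MeasurePreserving.id _)
  convert this using 1
  ext y i
  by_cases h : i = l
  · subst h; simp
  · simp [h]

lemma flip_emb {N : ℕ} (l : Fin N) :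
    MeasurableEmbedding (fun y : Fin N → ℝ => Function.update y l (-(y l))) := by
  have hm : Measurable (fun y : Fin N → ℝ => Function.update y l (-(y l))) := by
    rw [measurable_pi_iff]
    intro i
    by_cases h : i = l
    · subst h; simpa using (measurable_pi_apply i : Measurable fun y : Fin N → ℝ => y i)
    · simpa [h] using (measurable_pi_apply i : Measurable fun y : Fin N → ℝ => y i)
  have hi : ∀ y : Fin N → ℝ, (fun y : Fin N → ℝ => Function.update y l (-(y l)))
      ((fun y : Fin N → ℝ => Function.update y l (-(y l))) y) = y := by
    intro y; simp
  exact (MeasurableEquiv.mk (Equiv.mk (fun y : Fin N → ℝ => Function.update y l (-(y l))) (fun y : Fin N → ℝ => Function.update y l (-(y l))) hi hi) hm hm).measurableEmbedding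

lemma integral_odd {N : ℕ} (μ : Fin N → Measure ℝ) [∀ i, SigmaFinite (μ i)] (l : Fin N)
    (hl : MeasurePreserving (fun t : ℝ => -t) (μ l) (μ l)) (h : (Fin N → ℝ) → ℝ)
    (hodd : ∀ y, h (Function.update y l (-(y l))) = - h y) :
    ∫ y, h y ∂(Measure.pi μ) = 0 := by
  have := (flip_mp μ l hl).integral_comp (flip_emb l) h
  simp_rw [hodd] at this
  rw [integral_neg] at this
  linarith

lemma one_sub_tanh (t : ℝ) : 1 - Real.tanh t = Real.exp (-t) / Real.cosh t := by
  have := (Real.cosh_pos t).ne'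
  rw [Real.tanh_eq_sinh_div_cosh, ← Real.cosh_sub_sinh]
  field_simp

lemma tanh_meas : Measurable Real.tanh := by
  have : Real.tanh = fun t => Real.sinh t / Real.cosh t := by
    ext t; exact Real.tanh_eq_sinh_div_cosh t
  rw [this]
  exact Real.measurable_sinh.div Real.measurable_cosh

lemma key_zero (N : ℕ) (σ : ℝ) (hσ : 0 < σ) (x : Fin N → ℝ) (l : Fin N) (h : (Fin N → ℝ) → ℝ)
    (hodd : ∀ y, h (Function.update y l (-(y l))) = - h y) :
    ∫ y, h y * (1 - Real.tanh (y l * x l / σ ^ 2)) ∂gaussP N σ x = 0 := by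
  rw [integral_gaussP N σ hσ]
  refine integral_odd (fun _ => volume) l (Measure.measurePreserving_neg _) _ ?_
  intro y
  rw [hodd, one_sub_tanh, one_sub_tanh]
  simp only [Function.update_self]
  have h1 : ∀ z : Fin N → ℝ, (∏ i, gaussianPDFReal (x i) (Real.toNNReal (σ ^ 2)) (z i)) =
      gaussianPDFReal (x l) (Real.toNNReal (σ ^ 2)) (z l) *
      ∏ i ∈ Finset.univ.erase l, gaussianPDFReal (x i) (Real.toNNReal (σ ^ 2)) (z i) :=
    fun z => (Finset.mul_prod_erase _ _ (Finset.mem_univ l)).symm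
  rw [h1, h1]
  have h2 : (∏ i ∈ Finset.univ.erase l, gaussianPDFReal (x i) (Real.toNNReal (σ ^ 2))
      (Function.update y l (-(y l)) i)) = ∏ i ∈ Finset.univ.erase l,
        gaussianPDFReal (x i) (Real.toNNReal (σ ^ 2)) (y i) := by
    refine Finset.prod_congr rfl fun i hi => ?_
    rw [Function.update_of_ne (Finset.ne_of_mem_erase hi)]
  rw [h2, Function.update_self]
  have h3 : gaussianPDFReal (x l) (Real.toNNReal (σ ^ 2)) (-(y l)) *
      Real.exp (-(-(y l) * x l / σ ^ 2)) =
      gaussianPDFReal (x l) (Real.toNNReal (σ ^ 2)) (y l) *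
      Real.exp (-(y l * x l / σ ^ 2)) := by
    simp only [gaussianPDFReal]
    rw [mul_assoc (√_)⁻¹, mul_assoc (√_)⁻¹, ← Real.exp_add, ← Real.exp_add,
      Real.coe_toNNReal _ (by positivity)]
    congr 2
    field_simp
    ring
  have h4 : Real.cosh (-(y l) * x l / σ ^ 2) = Real.cosh (y l * x l / σ ^ 2) := by
    rw [← Real.cosh_neg]; congr 1; ring
  rw [h4]
  generalize (∏ i ∈ Finset.univ.erase l,
        gaussianPDFReal (x i) (Real.toNNReal (σ ^ 2)) (y i)) = P
  calc _ = -(gaussianPDFReal (x l) (Real.toNNReal (σ ^ 2)) (-(y l)) *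
      Real.exp (-(-(y l) * x l / σ ^ 2))) * P * h y / Real.cosh (y l * x l / σ ^ 2) := by ring
    _ = _ := by rw [h3]; ring

lemma prod_tanh_le {N : ℕ} (σ : ℝ) (x : Fin N → ℝ) (A : Finset (Fin N)) (y : Fin N → ℝ) :
    |∏ l ∈ A, Real.tanh (y l * x l / σ ^ 2)| ≤ 1 := by
  rw [Finset.abs_prod]
  exact Finset.prod_le_one (fun _ _ => abs_nonneg _) fun _ _ => (Real.abs_tanh_lt_one _).le

lemma prod_tanh_meas {N : ℕ} (σ : ℝ) (x : Fin N → ℝ) (A : Finset (Fin N)) :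
    Measurable fun y : Fin N → ℝ => ∏ l ∈ A, Real.tanh (y l * x l / σ ^ 2) := by
  refine Finset.measurable_fun_prod _ fun i _ => tanh_meas.comp ?_
  fun_prop

lemma prod_tanh_flip_notMem {N : ℕ} (σ : ℝ) (x : Fin N → ℝ) (A : Finset (Fin N)) (l : Fin N)
    (hl : l ∉ A) (y : Fin N → ℝ) :
    ∏ i ∈ A, Real.tanh (Function.update y l (-(y l)) i * x i / σ ^ 2) =
      ∏ i ∈ A, Real.tanh (y i * x i / σ ^ 2) := by
  refine Finset.prod_congr rfl fun i hi => ?_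
  rw [Function.update_of_ne (show i ≠ l from fun h => hl (h ▸ hi))]

lemma prod_tanh_flip_mem {N : ℕ} (σ : ℝ) (x : Fin N → ℝ) (A : Finset (Fin N)) (l : Fin N)
    (hl : l ∈ A) (y : Fin N → ℝ) :
    ∏ i ∈ A, Real.tanh (Function.update y l (-(y l)) i * x i / σ ^ 2) =
      - ∏ i ∈ A, Real.tanh (y i * x i / σ ^ 2) := by
  rw [← Finset.mul_prod_erase _ _ hl, ← Finset.mul_prod_erase A _ hl,
    prod_tanh_flip_notMem σ x _ l (Finset.notMem_erase l A), Function.update_self,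
    ← neg_mul, ← Real.tanh_neg]
  congr 2
  ring

lemma integrable_mul_prod {N : ℕ} (σ : ℝ) (x : Fin N → ℝ) (A : Finset (Fin N))
    (μ : Measure (Fin N → ℝ)) (h : (Fin N → ℝ) → ℝ) (hi : Integrable h μ) :
    Integrable (fun y => h y * ∏ l ∈ A, Real.tanh (y l * x l / σ ^ 2)) μ :=
  hi.mul_bdd (c := 1) (prod_tanh_meas σ x A).aestronglyMeasurable
    (Eventually.of_forall fun y => prod_tanh_le σ x A y)

lemma key_prod (N : ℕ) (σ : ℝ) (hσ : 0 < σ) (x : Fin N → ℝ) (h : (Fin N → ℝ) → ℝ)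
    (hi : Integrable h (gaussP N σ x)) (A : Finset (Fin N))
    (hodd : ∀ l ∈ A, ∀ y, h (Function.update y l (-(y l))) = - h y) :
    ∫ y, h y ∂gaussP N σ x =
      ∫ y, h y * ∏ l ∈ A, Real.tanh (y l * x l / σ ^ 2) ∂gaussP N σ x := by
  induction A using Finset.induction_on with
  | empty => simp
  | insert a A ha ih =>
    rw [ih fun l hl => hodd l (Finset.mem_insert_of_mem hl)]
    have h0 := key_zero N σ hσ x a
      (fun y => h y * ∏ l ∈ A, Real.tanh (y l * x l / σ ^ 2)) (by
        intro y
        rw [prod_tanh_flip_notMem σ x A a ha, hodd a (Finset.mem_insert_self _ _)]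
        ring)
    have e : ∀ y : Fin N → ℝ, (h y * ∏ l ∈ A, Real.tanh (y l * x l / σ ^ 2)) *
        (1 - Real.tanh (y a * x a / σ ^ 2)) =
        h y * (∏ l ∈ A, Real.tanh (y l * x l / σ ^ 2)) -
        h y * ∏ l ∈ insert a A, Real.tanh (y l * x l / σ ^ 2) := by
      intro y; rw [Finset.prod_insert ha]; ring
    simp_rw [e] at h0
    rw [integral_sub (integrable_mul_prod σ x A _ h hi)
      (integrable_mul_prod σ x (insert a A) _ h hi)] at h0
    linarith

instance (N : ℕ) (σ : ℝ) (x : Fin N → ℝ) : IsProbabilityMeasure (gaussP N σ x) := by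
  unfold gaussP; infer_instance

lemma memLp_coord (N : ℕ) (σ : ℝ) (x : Fin N → ℝ) (k : Fin N) :
    MemLp (fun y : Fin N → ℝ => y k) 2 (gaussP N σ x) :=
  (memLp_id_gaussianReal' 2 (by simp)).comp_measurePreserving
    (measurePreserving_eval (fun i => gaussianReal (x i) (Real.toNNReal (σ ^ 2))) k)

lemma integral_coord (N : ℕ) (σ : ℝ) (x : Fin N → ℝ) (k : Fin N) :
    ∫ y, y k ∂gaussP N σ x = x k := by
  have h := integral_comp_eval (μ := fun i => gaussianReal (x i) (Real.toNNReal (σ ^ 2)))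
    (i := k) (f := fun t : ℝ => t) measurable_id.aestronglyMeasurable
  exact h.trans integral_id_gaussianReal

lemma fc_meas (N : ℕ) (σ : ℝ) (x₀ : Fin N → ℝ) (k : Fin N) : Measurable (fc N σ x₀ k) :=
  ((measurable_pi_apply k).mul (prod_tanh_meas σ x₀ _)).neg

lemma fc_memLp (N : ℕ) (σ : ℝ) (x₀ x : Fin N → ℝ) (k : Fin N) :
    MemLp (fc N σ x₀ k) 2 (gaussP N σ x) := by
  refine (memLp_coord N σ x k).mono (fc_meas N σ x₀ k).aestronglyMeasurable
    (Eventually.of_forall fun y => ?_)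
  simp only [fc, Real.norm_eq_abs, abs_neg, abs_mul]
  exact mul_le_of_le_one_right (abs_nonneg _) (prod_tanh_le σ x₀ _ y)

lemma fc_odd (N : ℕ) (σ : ℝ) (x₀ : Fin N → ℝ) (k : Fin N) (hk : k ∉ supp x₀) :
    ∀ l ∈ insert k (supp x₀), ∀ y : Fin N → ℝ,
    fc N σ x₀ k (Function.update y l (-(y l))) = - fc N σ x₀ k y := by
  intro l hl y
  unfold fc
  rcases Finset.mem_insert.1 hl with rfl | hl'
  · rw [prod_tanh_flip_notMem σ x₀ _ l hk, Function.update_self]; ring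
  · rw [prod_tanh_flip_mem σ x₀ _ l hl', Function.update_of_ne (show k ≠ l from fun h => hk (h ▸ hl'))]; ring

lemma fc_adm (N S : ℕ) (σ : ℝ)
    (x₀ : Fin N → ℝ) (hcard : (supp x₀).card = S) (k : Fin N) (hk : k ∉ supp x₀) :
    Admissible N S σ x₀ k (fc N σ x₀ k) := by
  refine ⟨fc_meas N σ x₀ k, fc_odd N σ x₀ k hk, ?_, ?_, ?_⟩
  · intro y y' h
    unfold fc
    rw [h k (Finset.mem_insert_self _ _), Finset.prod_congr rfl fun l hl => by
      rw [h l (Finset.mem_insert_of_mem hl)]]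
  · intro x hx
    have i1 := (memLp_coord N σ x k).integrable (by norm_num)
    have i2 := (fc_memLp N σ x₀ x k).integrable (by norm_num)
    refine ⟨i1.add i2, ?_⟩
    rw [integral_add i1 i2, integral_coord]
    obtain ⟨l, hl, hxl⟩ : ∃ l ∈ insert k (supp x₀), l ∉ supp x := by
      by_contra! hc
      have h1 := Finset.card_le_card (show insert k (supp x₀) ⊆ supp x from hc)
      rw [Finset.card_insert_of_notMem hk, hcard] at h1
      have h2 : (supp x).card ≤ S := hx
      omega
    have hx0 : x l = 0 := by simpa [supp] using hxl
    have : ∫ y, fc N σ x₀ k y ∂gaussP N σ x = 0 := by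
      refine integral_odd _ l ⟨measurable_neg, ?_⟩ _ (fc_odd N σ x₀ k hk l hl)
      rw [hx0, gaussianReal_map_neg, neg_zero]
    rw [this, add_zero]
  · exact ((memLp_coord N σ x₀ k).add (fc_memLp N σ x₀ x₀ k)).integrable_sq

lemma mse_eq (N S : ℕ) (σ : ℝ) (hσ : 0 < σ)
    (x₀ : Fin N → ℝ) (k : Fin N) (hk : k ∉ supp x₀)
    (f : (Fin N → ℝ) → ℝ) (hf : Admissible N S σ x₀ k f) :
    MemLp f 2 (gaussP N σ x₀) ∧
    (∫ y, (y k + f y) ^ 2 ∂gaussP N σ x₀) =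
      (∫ y, (f y - fc N σ x₀ k y) ^ 2 ∂gaussP N σ x₀) +
      ∫ y, (y k ^ 2 - fc N σ x₀ k y ^ 2) ∂gaussP N σ x₀ := by
  obtain ⟨hm, hodd, -, -, hsq⟩ := hf
  have m1 := memLp_coord N σ x₀ k
  have m2 := fc_memLp N σ x₀ x₀ k
  have m3 : MemLp (fun y => y k + f y) 2 (gaussP N σ x₀) :=
    (memLp_two_iff_integrable_sq
      ((measurable_pi_apply k).add hm).aestronglyMeasurable).2 hsq
  have m4 : MemLp f 2 (gaussP N σ x₀) := by
    have := m3.sub m1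
    refine this.congr_norm hm.aestronglyMeasurable (Eventually.of_forall fun y => ?_)
    simp
  refine ⟨m4, ?_⟩
  have ig : Integrable (fun y => y k * f y) (gaussP N σ x₀) := m1.integrable_mul m4
  have hk2 := key_prod N σ hσ x₀ (fun y => y k * f y) ig (supp x₀) (by
    intro l hl y
    rw [Function.update_of_ne (show k ≠ l from fun h => hk (h ▸ hl)), hodd l (Finset.mem_insert_of_mem hl)]
    ring)
  have ig2 := integrable_mul_prod σ x₀ (supp x₀) _ _ ig
  have i1 : Integrable (fun y => (f y - fc N σ x₀ k y) ^ 2) (gaussP N σ x₀) :=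
    (m4.sub m2).integrable_sq
  have i2 : Integrable (fun y => y k ^ 2 - fc N σ x₀ k y ^ 2) (gaussP N σ x₀) :=
    m1.integrable_sq.sub m2.integrable_sq
  rw [← integral_add i1 i2, ← sub_eq_zero]
  refine (integral_sub hsq (i1.add i2)).symm.trans ?_
  have e : ∀ y : Fin N → ℝ, (y k + f y) ^ 2 - ((f y - fc N σ x₀ k y) ^ 2 +
      (y k ^ 2 - fc N σ x₀ k y ^ 2)) = 2 * (y k * f y -
      y k * f y * ∏ l ∈ supp x₀, Real.tanh (y l * x₀ l / σ ^ 2)) := by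
    intro y; unfold fc; ring
  simp only [Pi.add_apply]
  simp_rw [e]
  rw [integral_const_mul, integral_sub ig ig2, hk2, sub_self, mul_zero]

/-- `f_c` is admissible and minimizes the MSE at `x₀` among all admissible corrections. -/
theorem stmt_11 (N S : ℕ) (σ : ℝ) (hσ : 0 < σ) (hS : 1 ≤ S) (hSN : S < N)
    (x₀ : Fin N → ℝ) (hcard : (supp x₀).card = S) (k : Fin N) (hk : k ∉ supp x₀) :
    Admissible N S σ x₀ k (fc N σ x₀ k) ∧
    ∀ f : (Fin N → ℝ) → ℝ, Admissible N S σ x₀ k f →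
      (∫ y, (y k + fc N σ x₀ k y) ^ 2 ∂gaussP N σ x₀)
        ≤ ∫ y, (y k + f y) ^ 2 ∂gaussP N σ x₀ := by
  have hfc := fc_adm N S σ x₀ hcard k hk
  refine ⟨hfc, fun f hf => ?_⟩
  rw [(mse_eq N S σ hσ x₀ k hk f hf).2, (mse_eq N S σ hσ x₀ k hk _ hfc).2]
  simp only [sub_self]
  have : 0 ≤ ∫ y, (f y - fc N σ x₀ k y) ^ 2 ∂gaussP N σ x₀ :=
    integral_nonneg fun y => sq_nonneg _
  simpa using this
end

section
/- (Hammersley–Chapman–Robbins bound for the sparse signal-in-noise model.) Let x₀ ∈ X_S and let v_1, …, v_p ∈ ℝ^N be test points with x₀ + v_i ∈ X_S for each i. Let V ∈ ℝ^{N×p} be the matrix with columns v_1, …, v_p, and let J ∈ ℝ^{p×p} have entries J_{ij} = exp(v_iᵀ v_j / σ²) − 1; assume J is invertible. Then every measurable unbiased estimator x̂ whose components are square-integrable with respect to P_{x₀} satisfies ε(x₀; x̂) ≥ Tr(V J⁻¹ Vᵀ). -/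
open MeasureTheory ProbabilityTheory Filter
open scoped ENNReal Classical

/-- One-dimensional likelihood ratio. -/
noncomputable def lr1 (σ x w y : ℝ) : ℝ := Real.exp ((w * (y - x) - w ^ 2 / 2) / σ ^ 2)

/-- Likelihood ratio of `P_{x+w}` with respect to `P_x`. -/
noncomputable def lrN {N : ℕ} (σ : ℝ) (x w y : Fin N → ℝ) : ℝ :=
  ∏ i, lr1 σ (x i) (w i) (y i)

lemma lr1_meas (σ x w : ℝ) : Measurable (lr1 σ x w) := by
  unfold lr1; fun_prop

lemma lrN_meas {N : ℕ} (σ : ℝ) (x w : Fin N → ℝ) : Measurable (lrN σ x w) := by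
  unfold lrN
  exact Finset.measurable_prod _ fun i _ => (lr1_meas _ _ _).comp (measurable_pi_apply i)

lemma lrN_pos {N : ℕ} (σ : ℝ) (x w y : Fin N → ℝ) : 0 < lrN σ x w y :=
  Finset.prod_pos fun _ _ => Real.exp_pos _

lemma lr1_nonneg (σ x w y : ℝ) : 0 ≤ lr1 σ x w y := (Real.exp_pos _).le

lemma gauss1 (σ : ℝ) (hσ : 0 < σ) (x w : ℝ) :
    gaussianReal (x + w) (Real.toNNReal (σ ^ 2)) =
      (gaussianReal x (Real.toNNReal (σ ^ 2))).withDensity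
        (fun y => ENNReal.ofReal (lr1 σ x w y)) := by
  have hv : Real.toNNReal (σ ^ 2) ≠ 0 := by
    simp only [ne_eq, Real.toNNReal_eq_zero, not_le]; positivity
  rw [gaussianReal_of_var_ne_zero _ hv, gaussianReal_of_var_ne_zero _ hv,
    ← withDensity_mul _ (measurable_gaussianPDF _ _) (lr1_meas _ _ _).ennreal_ofReal]
  congr 1
  funext y
  simp only [Pi.mul_apply, gaussianPDF]
  rw [← ENNReal.ofReal_mul (gaussianPDFReal_nonneg _ _ _)]
  congr 1
  simp only [gaussianPDFReal, lr1, Real.coe_toNNReal _ (sq_nonneg σ)]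
  rw [mul_assoc (√_)⁻¹, ← Real.exp_add]
  congr 2
  field_simp
  ring

lemma lr1_int (σ : ℝ) (hσ : 0 < σ) (x w : ℝ) :
    Integrable (lr1 σ x w) (gaussianReal x (Real.toNNReal (σ ^ 2))) := by
  have h : ∫⁻ y, ENNReal.ofReal (lr1 σ x w y) ∂gaussianReal x (Real.toNNReal (σ ^ 2)) = 1 := by
    rw [← setLIntegral_univ, ← withDensity_apply _ MeasurableSet.univ, ← gauss1 σ hσ]
    simp
  refine ⟨(lr1_meas _ _ _).aestronglyMeasurable, ?_⟩
  rw [hasFiniteIntegral_iff_ofReal (ae_of_all _ fun y => (Real.exp_pos _).le : 0 ≤ᵐ[_] lr1 σ x w), h]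
  simp

instance {N : ℕ} (σ : ℝ) (x : Fin N → ℝ) : IsProbabilityMeasure (gaussP N σ x) := by
  unfold gaussP; infer_instance

lemma gaussN {N : ℕ} (σ : ℝ) (hσ : 0 < σ) (x w : Fin N → ℝ) :
    gaussP N σ (x + w) =
      (gaussP N σ x).withDensity (fun y => ENNReal.ofReal (lrN σ x w y)) := by
  unfold gaussP
  refine Measure.pi_eq fun s hs => ?_
  rw [withDensity_apply _ (MeasurableSet.univ_pi hs), Measure.restrict_pi_pi]
  have hi : ∀ i, Integrable (lr1 σ (x i) (w i))
      ((gaussianReal (x i) (Real.toNNReal (σ ^ 2))).restrict (s i)) :=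
    fun i => (lr1_int σ hσ _ _).restrict
  have hI : Integrable (lrN σ x w) (Measure.pi fun i =>
      (gaussianReal (x i) (Real.toNNReal (σ ^ 2))).restrict (s i)) := Integrable.fintype_prod hi
  rw [← ofReal_integral_eq_lintegral_ofReal hI (ae_of_all _ fun y => (lrN_pos σ x w y).le)]
  unfold lrN
  rw [integral_fintype_prod_eq_prod (fun i => lr1 σ (x i) (w i)),
    ENNReal.ofReal_prod_of_nonneg
      (fun i _ => integral_nonneg fun y => lr1_nonneg σ (x i) (w i) y)]
  refine Finset.prod_congr rfl fun i _ => ?_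
  rw [ofReal_integral_eq_lintegral_ofReal (hi i) (ae_of_all _ fun y => lr1_nonneg _ _ _ _),
    Pi.add_apply, gauss1 σ hσ, withDensity_apply _ (hs i)]

lemma lrN_integrable_mul {N : ℕ} (σ : ℝ) (hσ : 0 < σ) (x w : Fin N → ℝ)
    (g : (Fin N → ℝ) → ℝ) (hg : Integrable g (gaussP N σ (x + w))) :
    Integrable (fun y => lrN σ x w y * g y) (gaussP N σ x) := by
  rw [gaussN σ hσ, integrable_withDensity_iff_integrable_smul'
    (lrN_meas σ x w).ennreal_ofReal (by simp)] at hg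
  simpa [ENNReal.toReal_ofReal (lrN_pos σ x w _).le] using hg

lemma lrN_integral_mul {N : ℕ} (σ : ℝ) (hσ : 0 < σ) (x w : Fin N → ℝ)
    (g : (Fin N → ℝ) → ℝ) :
    ∫ y, lrN σ x w y * g y ∂(gaussP N σ x) = ∫ y, g y ∂(gaussP N σ (x + w)) := by
  rw [gaussN σ hσ, integral_withDensity_eq_integral_toReal_smul
    (lrN_meas σ x w).ennreal_ofReal (by simp)]
  simp [ENNReal.toReal_ofReal (lrN_pos σ x w _).le]

lemma lrN_mul {N : ℕ} (σ : ℝ) (x v w y : Fin N → ℝ) :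
    lrN σ x v y * lrN σ x w y =
      Real.exp ((∑ n, v n * w n) / σ ^ 2) * lrN σ x (v + w) y := by
  simp only [lrN, lr1, ← Real.exp_sum, ← Real.exp_add, Finset.sum_div]
  rw [← Finset.sum_add_distrib, ← Finset.sum_add_distrib]
  congr 1
  refine Finset.sum_congr rfl fun i _ => ?_
  simp only [Pi.add_apply]
  ring

lemma hcr_abstract {Ω : Type*} [MeasurableSpace Ω] (μ : Measure Ω) {p : ℕ}
    (e : Ω → ℝ) (f : Fin p → Ω → ℝ) (he : Integrable (fun y => e y ^ 2) μ)
    (hef : ∀ i, Integrable (fun y => e y * f i y) μ)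
    (hff : ∀ i j, Integrable (fun y => f i y * f j y) μ)
    (a b : Fin p → ℝ) (J : Matrix (Fin p) (Fin p) ℝ)
    (hb : ∀ i, ∫ y, e y * f i y ∂μ = b i)
    (hJ : ∀ i j, ∫ y, f i y * f j y ∂μ = J i j)
    (haJ : ∀ j, ∑ i, a i * J i j = b j) :
    ∑ i, a i * b i ≤ ∫ y, e y ^ 2 ∂μ := by
  have h0 : 0 ≤ ∫ y, (e y - ∑ i, a i * f i y) ^ 2 ∂μ :=
    integral_nonneg fun y => sq_nonneg _
  have h1 : ∀ y, (e y - ∑ i, a i * f i y) ^ 2 =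
      e y ^ 2 - 2 * (∑ i, a i * (e y * f i y)) +
        ∑ j, ∑ i, a i * a j * (f i y * f j y) := by
    intro y
    have h2 : ∑ i, a i * (e y * f i y) = e y * ∑ i, a i * f i y := by
      rw [Finset.mul_sum]; exact Finset.sum_congr rfl fun i _ => by ring
    have h3 : ∑ j, ∑ i, a i * a j * (f i y * f j y) = (∑ i, a i * f i y) * ∑ i, a i * f i y := by
      rw [Finset.mul_sum]
      refine Finset.sum_congr rfl fun j _ => ?_
      rw [Finset.sum_mul]
      exact Finset.sum_congr rfl fun i _ => by ring
    rw [h2, h3]; ring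
  have i1 : Integrable (fun y => ∑ i, a i * (e y * f i y)) μ :=
    integrable_finsetSum _ fun i _ => (hef i).const_mul _
  have i2 : ∀ j, Integrable (fun y => ∑ i, a i * a j * (f i y * f j y)) μ :=
    fun j => integrable_finsetSum _ fun i _ => (hff i j).const_mul _
  have i3 : Integrable (fun y => e y ^ 2 - 2 * (∑ i, a i * (e y * f i y))) μ :=
    he.sub (i1.const_mul 2)
  simp_rw [h1] at h0
  rw [integral_add i3 (integrable_finsetSum _ fun j _ => i2 j),
    integral_sub he (i1.const_mul 2), integral_const_mul,
    integral_finsetSum _ (fun i _ => (hef i).const_mul _),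
    integral_finsetSum _ (fun j _ => i2 j)] at h0
  have h4 : ∑ j, ∫ y, ∑ i, a i * a j * (f i y * f j y) ∂μ = ∑ i, a i * b i := by
    refine Finset.sum_congr rfl fun j _ => ?_
    rw [integral_finsetSum _ (fun i _ => (hff i j).const_mul _), ← haJ j, Finset.mul_sum]
    refine Finset.sum_congr rfl fun i _ => ?_
    rw [integral_const_mul, hJ]; ring
  rw [h4] at h0
  simp_rw [integral_const_mul, hb] at h0
  linarith

/-- The Hammersley–Chapman–Robbins bound: for test points `v_i` with `x₀ + v_i ∈ X_S`,
every measurable unbiased square-integrable estimator satisfies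
`ε(x₀; x̂) ≥ Tr(V J⁻¹ Vᵀ)`. -/
theorem stmt_13 (N S : ℕ) (σ : ℝ) (hσ : 0 < σ) (hS : 1 ≤ S) (hSN : S ≤ N)
    (x₀ : Fin N → ℝ) (hx₀ : x₀ ∈ sparseSet N S)
    (p : ℕ) (v : Fin p → Fin N → ℝ) (hv : ∀ i, x₀ + v i ∈ sparseSet N S)
    (V : Matrix (Fin N) (Fin p) ℝ) (hV : ∀ n i, V n i = v i n)
    (J : Matrix (Fin p) (Fin p) ℝ)
    (hJ : ∀ i j, J i j = Real.exp ((∑ n, v i n * v j n) / σ ^ 2) - 1)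
    (hJunit : IsUnit J)
    (est : (Fin N → ℝ) → Fin N → ℝ) (hmeas : Measurable est)
    (hunb : Unbiased N S σ est)
    (hsq : ∀ i, Integrable (fun y => (est y i) ^ 2) (gaussP N σ x₀)) :
    ENNReal.ofReal (Matrix.trace (V * J⁻¹ * V.transpose)) ≤ MSE N σ est x₀ := by
  set μ := gaussP N σ x₀ with hμ
  have hL : ∀ w, Integrable (lrN σ x₀ w) μ := fun w => by
    simpa using lrN_integrable_mul σ hσ x₀ w (fun _ => 1) (integrable_const _)
  have hL1 : ∀ w, ∫ y, lrN σ x₀ w y ∂μ = 1 := fun w => by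
    simpa using lrN_integral_mul σ hσ x₀ w (fun _ => 1)
  have hLL : ∀ v w, Integrable (fun y => lrN σ x₀ v y * lrN σ x₀ w y) μ := fun v w => by
    simp_rw [lrN_mul]; exact (hL _).const_mul _
  have hLL1 : ∀ v w, ∫ y, lrN σ x₀ v y * lrN σ x₀ w y ∂μ =
      Real.exp ((∑ n, v n * w n) / σ ^ 2) := fun v w => by
    simp_rw [lrN_mul]; rw [integral_const_mul, hL1, mul_one]
  have hE : ∀ n, Integrable (fun y => est y n) μ := fun n => (hunb x₀ hx₀ n).1
  have he : ∀ n, Integrable (fun y => (est y n - x₀ n) ^ 2) μ := fun n => by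
    have : (fun y => (est y n - x₀ n) ^ 2) =
        fun y => est y n ^ 2 - 2 * x₀ n * est y n + x₀ n ^ 2 := by funext y; ring
    rw [this]
    exact ((hsq n).sub ((hE n).const_mul _)).add (integrable_const _)
  have hLE : ∀ i n, Integrable (fun y => lrN σ x₀ (v i) y * est y n) μ := fun i n =>
    lrN_integrable_mul σ hσ x₀ (v i) _ (hunb _ (hv i) n).1
  have hLE1 : ∀ i n, ∫ y, lrN σ x₀ (v i) y * est y n ∂μ = x₀ n + v i n := fun i n => by
    rw [lrN_integral_mul σ hσ x₀ (v i), (hunb _ (hv i) n).2]; rfl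
  have hrow : ∀ n, ∑ i, (V * J⁻¹) n i * V n i ≤ ∫ y, (est y n - x₀ n) ^ 2 ∂μ := by
    intro n
    have e1 : ∀ i, (fun y => (est y n - x₀ n) * (lrN σ x₀ (v i) y - 1)) =
        fun y => lrN σ x₀ (v i) y * est y n - x₀ n * lrN σ x₀ (v i) y - est y n + x₀ n :=
      fun i => by funext y; ring
    have e2 : ∀ i j, (fun y => (lrN σ x₀ (v i) y - 1) * (lrN σ x₀ (v j) y - 1)) =
        fun y => lrN σ x₀ (v i) y * lrN σ x₀ (v j) y - lrN σ x₀ (v i) y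
          - lrN σ x₀ (v j) y + 1 :=
      fun i j => by funext y; ring
    have k1 : ∀ i, Integrable (fun y => lrN σ x₀ (v i) y * est y n - x₀ n * lrN σ x₀ (v i) y) μ := fun i => (hLE i n).sub ((hL (v i)).const_mul (x₀ n))
    have k2 : ∀ i, Integrable (fun y => lrN σ x₀ (v i) y * est y n - x₀ n * lrN σ x₀ (v i) y - est y n) μ := fun i => (k1 i).sub (hE n)
    have m1 : ∀ i j, Integrable (fun y => lrN σ x₀ (v i) y * lrN σ x₀ (v j) y - lrN σ x₀ (v i) y) μ := fun i j => (hLL (v i) (v j)).sub (hL (v i))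
    have m2 : ∀ i j, Integrable (fun y => lrN σ x₀ (v i) y * lrN σ x₀ (v j) y - lrN σ x₀ (v i) y - lrN σ x₀ (v j) y) μ := fun i j => (m1 i j).sub (hL (v j))
    refine hcr_abstract μ (fun y => est y n - x₀ n) (fun i y => lrN σ x₀ (v i) y - 1)
      (he n) ?_ ?_ (fun i => (V * J⁻¹) n i) (fun i => V n i) J ?_ ?_ ?_
    · intro i
      rw [e1]
      exact (k2 i).add (integrable_const _)
    · intro i j
      rw [e2]
      exact (m2 i j).add (integrable_const _)
    · intro i
      rw [e1]
      rw [integral_add (k2 i) (integrable_const _), integral_sub (k1 i) (hE n),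
        integral_sub (hLE i n) ((hL (v i)).const_mul (x₀ n)), hLE1, integral_const_mul, hL1,
        (hunb x₀ hx₀ n).2, hV]
      simp
    · intro i j
      rw [e2]
      rw [integral_add (m2 i j) (integrable_const _), integral_sub (m1 i j) (hL _),
        integral_sub (hLL _ _) (hL _), hLL1, hL1, hL1, hJ]
      simp
    · intro j
      have h : (V * J⁻¹ * J) n j = V n j := by
        rw [Matrix.nonsing_inv_mul_cancel_right _ _ ((Matrix.isUnit_iff_isUnit_det J).1 hJunit)]
      rw [← h, Matrix.mul_apply]
  have hM : MSE N σ est x₀ = ENNReal.ofReal (∑ n, ∫ y, (est y n - x₀ n) ^ 2 ∂μ) := by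
    rw [← integral_finsetSum _ fun n _ => he n,
      ofReal_integral_eq_lintegral_ofReal (integrable_finsetSum _ fun n _ => he n)
        (ae_of_all _ fun y => Finset.sum_nonneg fun n _ => sq_nonneg _)]
    rfl
  rw [hM]
  refine ENNReal.ofReal_le_ofReal ?_
  rw [Matrix.trace]
  refine Finset.sum_le_sum fun n _ => ?_
  rw [Matrix.diag_apply, Matrix.mul_apply]
  exact hrow n
end
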